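/- Let G be a finite simple connected graph in which every block is a cycle. Then 2·W(G) = Sz*(G) if and only if every cycle of G has even length. -/

import Mathlib

open Finset

attribute [local instance] Classical.propDecidable

variable {V : Type*}

/-- `n_G(s,t)`: the number of vertices strictly closer to `s` than to `t`. -/
noncomputable def closerCount [Fintype V] (G : SimpleGraph V) (s t : V) : ℕ :=
  (Finset.univ.filter fun w => G.dist w s < G.dist w t).card

/-- `o_G(s,t)`: the number of vertices equidistant from `s` and `t`. -/
noncomputable def equidistCount [Fintype V] (G : SimpleGraph V) (s t : V) : ℕ :=
  (Finset.univ.filter fun w => G.dist w s = G.dist w t).card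

lemma equidistCount_comm [Fintype V] (G : SimpleGraph V) (s t : V) :
    equidistCount G s t = equidistCount G t s := by
  unfold equidistCount
  congr 1
  ext w
  simp only [Finset.mem_filter]
  exact and_congr_right fun _ => ⟨Eq.symm, Eq.symm⟩

/-- `o_G` as a function on unordered pairs (edges). -/
noncomputable def equidistSym2 [Fintype V] (G : SimpleGraph V) : Sym2 V → ℕ :=
  Sym2.lift ⟨fun s t => equidistCount G s t, fun s t => equidistCount_comm G s t⟩

/-- The Wiener index: the sum of distances over unordered pairs of vertices. -/
noncomputable def wiener [Fintype V] (G : SimpleGraph V) : ℕ :=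
  ∑ p : Sym2 V, Sym2.lift ⟨fun u v => G.dist u v, fun _ _ => G.dist_comm⟩ p

/-- The Szeged index `Sz(G) = Σ_{{s,t} ∈ E(G)} n_G(s,t) n_G(t,s)`. -/
noncomputable def szeged [Fintype V] (G : SimpleGraph V) : ℕ :=
  ∑ e ∈ G.edgeFinset,
    Sym2.lift ⟨fun s t => closerCount G s t * closerCount G t s,
      fun _ _ => Nat.mul_comm _ _⟩ e

/-- The revised Szeged index
`Sz*(G) = Σ_{{s,t} ∈ E(G)} (n_G(s,t) + o_G(s,t)/2) (n_G(t,s) + o_G(t,s)/2)`. -/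
noncomputable def revisedSzeged [Fintype V] (G : SimpleGraph V) : ℚ :=
  ∑ e ∈ G.edgeFinset,
    Sym2.lift ⟨fun s t =>
      ((closerCount G s t : ℚ) + (equidistCount G s t : ℚ) / 2) *
        ((closerCount G t s : ℚ) + (equidistCount G t s : ℚ) / 2),
      fun _ _ => mul_comm _ _⟩ e

/-- An edge `{s,t}` is `(u,v)`-distance-disparate if `d(u,s) < d(u,t)` and `d(v,s) > d(v,t)`,
or `d(u,s) > d(u,t)` and `d(v,s) < d(v,t)`. -/
def IsDisparate (G : SimpleGraph V) (u v : V) : Sym2 V → Prop :=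
  Sym2.lift ⟨fun s t =>
    (G.dist u s < G.dist u t ∧ G.dist v t < G.dist v s) ∨
      (G.dist u t < G.dist u s ∧ G.dist v s < G.dist v t),
    fun _ _ => propext or_comm⟩

/-- `dis_G(u,v)`: the number of `(u,v)`-distance-disparate edges of `G`. -/
noncomputable def disCount [Fintype V] (G : SimpleGraph V) (u v : V) : ℕ :=
  (G.edgeFinset.filter (IsDisparate G u v)).card

/-- An edge `{s,t}` is `(u,v)`-distance-equal if `d(u,s) = d(u,t)` and `d(v,s) = d(v,t)`. -/
def IsDistEqual (G : SimpleGraph V) (u v : V) : Sym2 V → Prop :=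
  Sym2.lift ⟨fun s t => G.dist u s = G.dist u t ∧ G.dist v s = G.dist v t,
    fun _ _ => propext ⟨fun h => ⟨h.1.symm, h.2.symm⟩, fun h => ⟨h.1.symm, h.2.symm⟩⟩⟩

/-- `deq_G(u,v)`: the number of `(u,v)`-distance-equal edges of `G`. -/
noncomputable def deqCount [Fintype V] (G : SimpleGraph V) (u v : V) : ℕ :=
  (G.edgeFinset.filter (IsDistEqual G u v)).card

/-- A subgraph without cut vertices: it is connected and deleting any single vertex leaves
it preconnected. -/
def NoCutVertexSub (G : SimpleGraph V) (H : G.Subgraph) : Prop :=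
  H.Connected ∧ ∀ v : V, ((H.deleteVerts {v}).coe.Preconnected)

/-- A block of `G`: a maximal connected subgraph without a cut vertex. -/
def IsBlock (G : SimpleGraph V) (B : G.Subgraph) : Prop :=
  NoCutVertexSub G B ∧ ∀ H : G.Subgraph, NoCutVertexSub G H → B ≤ H → B = H

/-- The subgraph `B` is a single edge together with its two endpoints. -/
def IsEdgeBlock (G : SimpleGraph V) (B : G.Subgraph) : Prop :=
  ∃ (u v : V) (h : G.Adj u v), B = G.subgraphOfAdj h

/-- The subgraph `B` is a cycle (of some length `n ≥ 3`). -/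
def IsCycleBlock (G : SimpleGraph V) (B : G.Subgraph) : Prop :=
  ∃ n : ℕ, 3 ≤ n ∧ Nonempty (B.coe ≃g SimpleGraph.cycleGraph n)

/-- A cactus graph: a connected graph in which every block is an edge or a cycle. -/
def IsCactus (G : SimpleGraph V) : Prop :=
  G.Connected ∧ ∀ B : G.Subgraph, IsBlock G B → IsEdgeBlock G B ∨ IsCycleBlock G B

/-! For an edge `st`, each vertex `u` has a gap `d(u,t) - d(u,s) ∈ {-1, 0, 1}`. Fix `u` and `v` and
sum, over all edges, the absolute difference between the gaps of `u` and `v`. When every block is a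
cycle, this sum is `4 d(u,v)`. Indeed, at an edge outside a block `B` all vertices of `B` have the
same gap, so the sum splits along the blocks traversed from `u` to `v`. Around a single cycle it is
the total variation of `x ↦ d(u,x) - d(v,x)`, which rises from `-d(u,v)` to `d(u,v)` and falls back.

Summing over all ordered pairs `(u,v)` instead, an edge `st` contributes
`4 (n(s,t) + o(s,t)/2) (n(t,s) + o(s,t)/2) - o(s,t)²`. Hence `Sz* = 2W + ¼ ∑ o(e)²`, and equality
holds iff no vertex is equidistant from the two ends of an edge. In a cycle block this is the case
iff the cycle is even, since distances from outside the block are measured through a single vertex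
of the block. -/

open SimpleGraph

section Blocks

variable {G : SimpleGraph V} {B H K : G.Subgraph} {s t x y z w : V}

lemma le_deleteVerts_singleton (h : H ≤ K) (hw : w ∉ H.verts) : H ≤ K.deleteVerts {w} := by
  rw [← H.induce_self_verts]
  exact Subgraph.induce_mono h fun a ha => ⟨h.1 ha, fun e => hw (e ▸ ha)⟩

lemma exists_walk_to_endpoint_notMem_support {p : G.Walk x y} (hp : p.IsPath)
    (hz : z ∈ p.support) (hzw : z ≠ w) :
    ∃ e ∈ ({x, y} : Set V), ∃ q : G.Walk z e, q.toSubgraph ≤ p.toSubgraph ∧ w ∉ q.support := by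
  have hsplit : (p.takeUntil z hz).toSubgraph ⊔ (p.dropUntil z hz).toSubgraph = p.toSubgraph := by
    rw [← Walk.toSubgraph_append, Walk.take_spec]
  by_cases hw : w ∈ (p.takeUntil z hz).support
  · refine ⟨y, by simp, p.dropUntil z hz, hsplit ▸ le_sup_right, fun hw' => ?_⟩
    have hnodup := hp.support_nodup
    rw [← Walk.take_spec p hz, Walk.support_append, List.nodup_append'] at hnodup
    exact hnodup.2.2 hw (((Walk.mem_support_iff _).1 hw').resolve_left hzw.symm)
  · refine ⟨x, by simp, (p.takeUntil z hz).reverse, ?_, by simpa using hw⟩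
    rw [Walk.toSubgraph_reverse]
    exact hsplit ▸ le_sup_left

lemma NoCutVertexSub.sup_toSubgraph (hB : NoCutVertexSub G B) (hx : x ∈ B.verts)
    (hy : y ∈ B.verts) {p : G.Walk x y} (hp : p.IsPath) :
    NoCutVertexSub G (B ⊔ p.toSubgraph) := by
  refine ⟨Subgraph.connected_sup hB.1.preconnected p.toSubgraph_connected.preconnected
    ⟨x, hx, p.start_mem_verts_toSubgraph⟩, fun w => ?_⟩
  have exists_walk_to_B : ∀ a ∈ ((B ⊔ p.toSubgraph).deleteVerts {w}).verts,
      ∃ b ∈ (B.deleteVerts {w}).verts, ∃ q : G.Walk a b,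
        q.toSubgraph ≤ (B ⊔ p.toSubgraph).deleteVerts {w} := by
    rintro a ⟨ha | ha, haw⟩
    · refine ⟨a, ⟨ha, haw⟩, Walk.nil, ?_⟩
      rw [Walk.toSubgraph, singletonSubgraph_le_iff]
      exact ⟨Or.inl ha, haw⟩
    · obtain ⟨b, hb, q, hqp, hwq⟩ :=
        exists_walk_to_endpoint_notMem_support hp (p.mem_verts_toSubgraph.1 ha) haw
      have hbB : b ∈ B.verts := by rcases hb with rfl | rfl <;> assumption
      exact ⟨b, ⟨hbB, fun e => hwq (e ▸ q.end_mem_support)⟩, q,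
        le_deleteVerts_singleton (hqp.trans le_sup_right) (by simpa using hwq)⟩
  refine ((Subgraph.preconnected_iff_forall_exists_walk_subgraph _).2 fun {a c} ha hc => ?_).coe
  obtain ⟨b, hb, q, hq⟩ := exists_walk_to_B a ha
  obtain ⟨d, hd, r, hr⟩ := exists_walk_to_B c hc
  obtain ⟨m, hm⟩ :=
    (Subgraph.preconnected_iff_forall_exists_walk_subgraph _).1 ⟨hB.2 w⟩ hb hd
  refine ⟨(q.append m).append r.reverse, ?_⟩
  rw [Walk.toSubgraph_append, Walk.toSubgraph_append, Walk.toSubgraph_reverse]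
  exact sup_le (sup_le hq (hm.trans (Subgraph.deleteVerts_mono le_sup_left))) hr

lemma noCutVertexSub_subgraphOfAdj (h : G.Adj s t) : NoCutVertexSub G (G.subgraphOfAdj h) := by
  refine ⟨Subgraph.subgraphOfAdj_connected h, fun w a b => ?_⟩
  by_cases hab : a = b
  · exact hab ▸ Reachable.refl a
  · obtain ⟨a, ha, haw⟩ := a
    obtain ⟨b, hb, hbw⟩ := b
    refine Adj.reachable ?_
    simp only [subgraphOfAdj_verts, Set.mem_insert_iff, Set.mem_singleton_iff] at ha hb haw hbw
    rw [Subgraph.coe_adj, Subgraph.deleteVerts_adj]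
    grind [subgraphOfAdj_verts, subgraphOfAdj_adj]

lemma exists_isBlock_adj [Finite V] (h : G.Adj s t) :
    ∃ B : G.Subgraph, IsBlock G B ∧ B.Adj s t := by
  obtain ⟨B, hle, hB⟩ := (Set.toFinite {H : G.Subgraph | NoCutVertexSub G H}).exists_le_maximal
    (noCutVertexSub_subgraphOfAdj h)
  exact ⟨B, ⟨hB.1, fun H hH hBH => hBH.antisymm (hB.2 hH hBH)⟩, hle.2 (by simp)⟩

lemma IsBlock.toSubgraph_le (hB : IsBlock G B) (hx : x ∈ B.verts) (hy : y ∈ B.verts)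
    {p : G.Walk x y} (hp : p.IsPath) : p.toSubgraph ≤ B :=
  sup_eq_left.1 (hB.2 _ (hB.1.sup_toSubgraph hx hy hp) le_sup_left).symm

end Blocks

section Attachment

variable {G : SimpleGraph V} {B : G.Subgraph} {u v p s t x y : V}

/-- `p` is the vertex through which `u` is attached to `B`: it lies in `B`, and `u` reaches it
without using any edge of `B`. When `B` is a block, `p` is unique, and every walk from `u` to `B`
passes through it. -/
def IsAttachment (B : G.Subgraph) (u p : V) : Prop :=
  p ∈ B.verts ∧ (G.deleteEdges B.edgeSet).Reachable u p

lemma IsAttachment.of_adj (hp : IsAttachment B t p) (hst : G.Adj s t) (hB : ¬B.Adj s t) :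
    IsAttachment B s p :=
  have hst' : (G.deleteEdges B.edgeSet).Adj s t := deleteEdges_adj.2 ⟨hst, hB⟩
  ⟨hp.1, hst'.reachable.trans hp.2⟩

lemma exists_isAttachment (hG : G.Preconnected) (hB : B.verts.Nonempty) (u : V) :
    ∃ p, IsAttachment B u p := by
  obtain ⟨b, hb⟩ := hB
  obtain ⟨w⟩ := hG u b
  induction w with
  | nil => exact ⟨_, hb, Reachable.refl _⟩
  | @cons u v b h _ ih =>
    by_cases huv : B.Adj u v
    · exact ⟨u, B.edge_vert huv, Reachable.refl _⟩
    · obtain ⟨p, hp⟩ := ih hb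
      exact ⟨p, hp.of_adj h huv⟩

lemma IsBlock.eq_of_reachable_deleteEdges (hB : IsBlock G B) (hx : x ∈ B.verts)
    (hy : y ∈ B.verts) (h : (G.deleteEdges B.edgeSet).Reachable x y) : x = y := by
  obtain ⟨q, hq⟩ := h.exists_isPath
  have hle := hB.toSubgraph_le hx hy (hq.mapLe (deleteEdges_le _))
  cases q with
  | nil => rfl
  | @cons _ z _ hxz q =>
    have hB_adj : B.Adj x z := hle.2 (by simp [Walk.toSubgraph])
    exact absurd hB_adj (deleteEdges_adj.1 hxz).2

lemma IsAttachment.mem_support (hp : IsAttachment B u p) (hB : IsBlock G B) (hv : v ∈ B.verts)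
    (w : G.Walk u v) : p ∈ w.support := by
  induction w with
  | nil => simp [hB.eq_of_reachable_deleteEdges hv hp.1 hp.2]
  | @cons u u' v h w ih =>
    by_cases huu' : B.Adj u u'
    · simp [hB.eq_of_reachable_deleteEdges (B.edge_vert huu') hp.1 hp.2]
    · have hp' : IsAttachment B u' p := hp.of_adj h.symm fun h' => huu' h'.symm
      exact List.mem_cons_of_mem _ (ih hp' hv)

lemma IsAttachment.dist_eq (hp : IsAttachment B u p) (hB : IsBlock G B) (hG : G.Connected)
    (hv : v ∈ B.verts) : G.dist u v = G.dist u p + G.dist p v := by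
  refine le_antisymm hG.dist_triangle ?_
  obtain ⟨w, hw⟩ := hG.exists_walk_length_eq_dist u v
  have hpw := hp.mem_support hB hv w
  calc G.dist u p + G.dist p v
      ≤ (w.takeUntil p hpw).length + (w.dropUntil p hpw).length :=
        add_le_add (dist_le _) (dist_le _)
    _ = G.dist u v := by rw [← Walk.length_append, Walk.take_spec, hw]

end Attachment

section CycleDist

variable {G : SimpleGraph V} {B : G.Subgraph} {p u v x y : V} {b i j n : ℕ}

/-- The distance between the positions `i, j ≤ n` on a closed walk of length `n`, whose positions
`0` and `n` coincide. -/
def cycleDist (n i j : ℕ) : ℕ :=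
  min ((i - j) + (j - i)) (n - ((i - j) + (j - i)))

lemma dist_getVert_le_cycleDist (c : G.Walk v v) (hi : i ≤ c.length) (hj : j ≤ c.length) :
    G.dist (c.getVert i) (c.getVert j) ≤ cycleDist c.length i j := by
  wlog hij : i ≤ j generalizing i j
  · rw [SimpleGraph.dist_comm]
    refine (this hj hi (le_of_not_ge hij)).trans_eq ?_
    simp only [cycleDist, add_comm]
  have forward : G.dist (c.getVert i) (c.getVert j) ≤ j - i := by
    have h := dist_le ((c.take j).drop i)
    rwa [Walk.drop_length, Walk.take_length, Walk.take_getVert, min_eq_right hij,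
      min_eq_left hj] at h
  have backward : G.dist (c.getVert i) (c.getVert j) ≤ c.length - (j - i) := by
    rw [SimpleGraph.dist_comm]
    have h := dist_le ((c.drop j).append (c.take i))
    rw [Walk.length_append, Walk.drop_length, Walk.take_length] at h
    omega
  simp only [cycleDist]
  omega

lemma cycleDist_eq_zero_of_getVert_eq {c : G.Walk v v} (hc : c.IsCycle) (hi : i ≤ c.length)
    (hj : j ≤ c.length) (h : c.getVert i = c.getVert j) : cycleDist c.length i j = 0 := by
  simp only [cycleDist]
  rcases Nat.eq_zero_or_pos i with rfl | hi0
  · rw [Walk.getVert_zero, eq_comm, hc.getVert_endpoint_iff hj] at h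
    omega
  rcases Nat.eq_zero_or_pos j with rfl | hj0
  · rw [Walk.getVert_zero, hc.getVert_endpoint_iff hi] at h
    omega
  have := hc.getVert_injOn ⟨hi0, hi⟩ ⟨hj0, hj⟩ h
  omega

lemma cycleDist_le_length {c : G.Walk v v} (hc : c.IsCycle) {w : G.Walk x y}
    (hw : w.toSubgraph ≤ c.toSubgraph) (hi : i ≤ c.length) (hj : j ≤ c.length)
    (hx : c.getVert i = x) (hy : c.getVert j = y) : cycleDist c.length i j ≤ w.length := by
  induction w generalizing i with
  | nil => exact (cycleDist_eq_zero_of_getVert_eq hc hi hj (hx.trans hy.symm)).le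
  | @cons x z y h w ih =>
    rw [Walk.toSubgraph, sup_le_iff] at hw
    have hxz : c.toSubgraph.Adj x z := hw.1.2 (by simp)
    obtain ⟨m, hm, hmlt⟩ := (Walk.toSubgraph_adj_iff c).1 hxz
    obtain ⟨k, l, hk, hl, hkx, hlz, hkl⟩ : ∃ k l, k ≤ c.length ∧ l ≤ c.length ∧
        c.getVert k = x ∧ c.getVert l = z ∧ (l = k + 1 ∨ k = l + 1) := by
      rcases Sym2.eq_iff.1 hm with ⟨hx, hz⟩ | ⟨hz, hx⟩
      · exact ⟨m, m + 1, hmlt.le, hmlt, hx, hz, Or.inl rfl⟩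
      · exact ⟨m + 1, m, hmlt, hmlt.le, hx, hz, Or.inr rfl⟩
    have hik := cycleDist_eq_zero_of_getVert_eq hc hi hk (hx.trans hkx.symm)
    have hlj := ih hw.2 hl hlz hy
    rw [Walk.length_cons]
    simp only [cycleDist] at hik hlj ⊢
    omega

lemma IsBlock.dist_getVert (hB : IsBlock G B) (hG : G.Connected) {c : G.Walk v v}
    (hc : c.IsCycle) (hcB : c.toSubgraph = B) (hi : i ≤ c.length) (hj : j ≤ c.length) :
    G.dist (c.getVert i) (c.getVert j) = cycleDist c.length i j := by
  refine le_antisymm (dist_getVert_le_cycleDist c hi hj) ?_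
  have getVert_mem (k : ℕ) : c.getVert k ∈ B.verts :=
    hcB ▸ c.mem_verts_toSubgraph.2 (c.getVert_mem_support k)
  obtain ⟨w, hw, hwlen⟩ := hG.exists_path_of_dist (c.getVert i) (c.getVert j)
  rw [← hwlen]
  exact cycleDist_le_length hc (hcB ▸ hB.toSubgraph_le (getVert_mem i) (getVert_mem j) hw)
    hi hj rfl rfl

lemma IsBlock.dist_start_getVert (hB : IsBlock G B) (hG : G.Connected) {c : G.Walk v v}
    (hc : c.IsCycle) (hcB : c.toSubgraph = B) (hi : i ≤ c.length) :
    G.dist v (c.getVert i) = cycleDist c.length 0 i := by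
  simpa using hB.dist_getVert hG hc hcB c.length.zero_le hi

lemma toSubgraph_cycleGraph_cycle (n : ℕ) : (cycleGraph.cycle n).toSubgraph = ⊤ := by
  have adj_add_one (v : Fin (n + 3)) : (cycleGraph.cycle n).toSubgraph.Adj (v + 1) v := by
    have hv := v.isLt
    have hfst : (cycleGraph.cycle n).getVert (n + 2 - v) = v + 1 := by
      rw [cycleGraph.getVert_cycle (by omega), Fin.ext_iff, Fin.val_add, Fin.val_one]
      exact congrArg (· % (n + 3)) (by omega : n + 3 - (n + 2 - v) = v + 1)
    have hsnd : (cycleGraph.cycle n).getVert (n + 2 - v + 1) = v := by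
      rw [cycleGraph.getVert_cycle (by omega), Fin.ext_iff]
      exact (congrArg (· % (n + 3)) (by omega)).trans (Nat.mod_eq_of_lt hv)
    rw [← hfst]
    nth_rw 2 [← hsnd]
    exact (cycleGraph.cycle n).toSubgraph_adj_getVert (by rw [cycleGraph.length_cycle]; omega)
  refine eq_top_iff.2 ⟨fun v _ => (adj_add_one v).snd_mem, fun v w h => ?_⟩
  rcases cycleGraph_adj.1 h with h | h
  · exact sub_eq_iff_eq_add'.1 h ▸ adj_add_one w
  · exact sub_eq_iff_eq_add'.1 h ▸ (adj_add_one v).symm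

lemma IsCycleBlock.exists_isCycle (hB : IsCycleBlock G B) (hp : p ∈ B.verts) :
    ∃ c : G.Walk p p, c.IsCycle ∧ c.toSubgraph = B := by
  obtain ⟨n, hn, ⟨φ⟩⟩ := hB
  obtain ⟨m, rfl⟩ := Nat.exists_eq_add_of_le' hn
  let ψ : cycleGraph (m + 3) →g G := B.hom.comp φ.symm.toHom
  have hψ : Function.Injective ψ := Subtype.val_injective.comp φ.symm.injective
  let c := (cycleGraph.cycle m).map ψ
  have hcB : c.toSubgraph = B := by
    rw [Walk.toSubgraph_map, toSubgraph_cycleGraph_cycle, Subgraph.map_comp,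
      Subgraph.map_iso_top φ.symm, Subgraph.map_hom_top]
  have hpc : p ∈ c.support := by rwa [← Walk.mem_verts_toSubgraph, hcB]
  refine ⟨c.rotate p hpc, ?_, by rw [Walk.toSubgraph_rotate, hcB]⟩
  exact (Walk.isCycle_rotate hpc).2 (cycleGraph.isCycle_cycle.map hψ)

lemma sum_Ico_abs_sub_of_monotone {f : ℕ → ℤ} {a b : ℕ} (hab : a ≤ b)
    (hf : ∀ i ∈ Ico a b, f i ≤ f (i + 1)) : ∑ i ∈ Ico a b, |f (i + 1) - f i| = f b - f a := by
  rw [← sum_Ico_sub f hab]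
  exact sum_congr rfl fun i hi => abs_of_nonneg (sub_nonneg.2 (hf i hi))

lemma sum_Ico_abs_sub_of_antitone {f : ℕ → ℤ} {a b : ℕ} (hab : a ≤ b)
    (hf : ∀ i ∈ Ico a b, f (i + 1) ≤ f i) : ∑ i ∈ Ico a b, |f (i + 1) - f i| = f a - f b := by
  rw [← neg_sub, ← sum_Ico_sub f hab, ← sum_neg_distrib]
  exact sum_congr rfl fun i hi => abs_of_nonpos (sub_nonpos.2 (hf i hi))

lemma sum_abs_cycleDist_sub (hb : b ≤ n) :
    ∑ i ∈ range n, |((cycleDist n 0 (i + 1) : ℤ) - cycleDist n b (i + 1)) -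
      (cycleDist n 0 i - cycleDist n b i)| = 4 * cycleDist n 0 b := by
  let f : ℕ → ℤ := fun i => cycleDist n 0 i - cycleDist n b i
  have increasing : ∑ i ∈ Ico 0 b, |f (i + 1) - f i| = f b - f 0 := by
    refine sum_Ico_abs_sub_of_monotone (Nat.zero_le b) fun i hi => ?_
    have := mem_Ico.1 hi
    simp only [f, cycleDist]
    omega
  have decreasing : ∑ i ∈ Ico b n, |f (i + 1) - f i| = f b - f n := by
    refine sum_Ico_abs_sub_of_antitone hb fun i hi => ?_
    have := mem_Ico.1 hi
    simp only [f, cycleDist]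
    omega
  have endpoints : f 0 = -cycleDist n 0 b ∧ f b = cycleDist n 0 b ∧ f n = -cycleDist n 0 b := by
    simp only [f, cycleDist]
    omega
  calc ∑ i ∈ range n, |f (i + 1) - f i| = (f b - f 0) + (f b - f n) := by
        rw [← increasing, ← decreasing, Nat.Ico_zero_eq_range, sum_range_add_sum_Ico _ hb]
    _ = 4 * cycleDist n 0 b := by omega

lemma sum_edges_toFinset_of_isTrail {M : Type*} [AddCommMonoid M] {w : G.Walk x y} (hw : w.IsTrail)
    (f : Sym2 V → M) :
    ∑ e ∈ w.edges.toFinset, f e = ∑ i ∈ range w.length, f s(w.getVert i, w.getVert (i + 1)) := by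
  rw [List.sum_toFinset f hw.edges_nodup, ← Fin.sum_univ_fun_getElem, ← w.length_edges,
    ← Fin.sum_univ_eq_sum_range fun i => f s(w.getVert i, w.getVert (i + 1))]
  exact sum_congr rfl fun i _ => by rw [Walk.getElem_edges]

end CycleDist

section Separation

variable {G : SimpleGraph V} {B : G.Subgraph} {p s t u v x : V} {e : Sym2 V}

/-- How much farther from `u` the vertex `t` is than the vertex `s`. It is `0` or `±1` when
`s` and `t` are adjacent. -/
noncomputable def distGap (G : SimpleGraph V) (s t u : V) : ℤ :=
  G.dist u t - G.dist u s

/-- How differently `u` and `v` see the pair `{s, t}`. On an edge this is `2` if the edge is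
`(u, v)`-distance-disparate, `1` if exactly one of `u` and `v` is equidistant from its ends, and
`0` otherwise. -/
noncomputable def separation (G : SimpleGraph V) (u v : V) : Sym2 V → ℤ :=
  Sym2.lift ⟨fun s t => |distGap G s t u - distGap G s t v|, fun s t => by
    simp only [distGap]
    rw [abs_sub_comm]
    congr 1
    ring⟩

lemma separation_mk : separation G u v s(s, t) = |distGap G s t u - distGap G s t v| :=
  rfl

lemma separation_self (e : Sym2 V) : separation G u u e = 0 := by
  induction e with | h s t => rw [separation_mk, sub_self, abs_zero]

lemma distGap_of_adj (h : G.Adj s t) (u : V) :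
    distGap G s t u = 1 ∨ distGap G s t u = 0 ∨ distGap G s t u = -1 := by
  have := h.diff_dist_adj (u := u)
  simp only [distGap]
  omega

lemma separation_eq_of_adj (h : G.Adj s t) (u v : V) :
    separation G u v s(s, t) = 1 - distGap G s t u * distGap G s t v -
      (1 - distGap G s t u ^ 2) * (1 - distGap G s t v ^ 2) := by
  rw [separation_mk]
  rcases distGap_of_adj h u with hu | hu | hu <;> rcases distGap_of_adj h v with hv | hv | hv <;>
    simp [hu, hv]

lemma IsAttachment.distGap_eq (hp : IsAttachment B u p) (hB : IsBlock G B) (hG : G.Connected)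
    (hs : s ∈ B.verts) (ht : t ∈ B.verts) : distGap G s t u = distGap G s t p := by
  rw [distGap, distGap, hp.dist_eq hB hG hs, hp.dist_eq hB hG ht]
  push_cast
  ring

lemma IsBlock.distGap_eq_of_not_adj (hB : IsBlock G B) (hG : G.Connected) (hst : G.Adj s t)
    (hB_st : ¬B.Adj s t) (hu : u ∈ B.verts) (hv : v ∈ B.verts) :
    distGap G s t u = distGap G s t v := by
  obtain ⟨q, hq⟩ := exists_isAttachment hG.preconnected ⟨u, hu⟩ t
  have dist_eq {x : V} (hx : x ∈ B.verts) :
      G.dist x s = G.dist s q + G.dist q x ∧ G.dist x t = G.dist t q + G.dist q x := by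
    rw [SimpleGraph.dist_comm, SimpleGraph.dist_comm (u := x)]
    exact ⟨(hq.of_adj hst hB_st).dist_eq hB hG hx, hq.dist_eq hB hG hx⟩
  simp only [distGap, dist_eq hu, dist_eq hv]
  push_cast
  ring

lemma IsBlock.separation_eq_zero (hB : IsBlock G B) (hG : G.Connected) (hu : u ∈ B.verts)
    (hv : v ∈ B.verts) (he : e ∈ G.edgeSet) (heB : e ∉ B.edgeSet) : separation G u v e = 0 := by
  induction e with
  | h s t => rw [separation_mk, hB.distGap_eq_of_not_adj hG he heB hu hv, sub_self, abs_zero]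

lemma IsAttachment.separation_add (hp : IsAttachment B u p) (hB : IsBlock G B)
    (hG : G.Connected) (hv : v ∈ B.verts) (he : e ∈ G.edgeSet) :
    separation G u v e = separation G u p e + separation G p v e := by
  by_cases heB : e ∈ B.edgeSet
  · induction e with
    | h s t =>
      have hst : B.Adj s t := heB
      simp [separation_mk, hp.distGap_eq hB hG hst.fst_mem hst.snd_mem]
  · induction e with
    | h s t => simp [separation_mk, hB.distGap_eq_of_not_adj hG he heB hp.1 hv]

variable [Fintype V]

lemma IsBlock.sum_separation (hB : IsBlock G B) (hcycle : IsCycleBlock G B) (hG : G.Connected)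
    (hp : p ∈ B.verts) (hv : v ∈ B.verts) :
    ∑ e ∈ G.edgeFinset, separation G p v e = 4 * G.dist p v := by
  obtain ⟨c, hc, hcB⟩ := hcycle.exists_isCycle hp
  obtain ⟨b, rfl, hb⟩ : ∃ b, c.getVert b = v ∧ b ≤ c.length :=
    Walk.mem_support_iff_exists_getVert.1 (c.mem_verts_toSubgraph.1 (hcB ▸ hv))
  have dist_p {i : ℕ} (hi : i ≤ c.length) : G.dist p (c.getVert i) = cycleDist c.length 0 i :=
    hB.dist_start_getVert hG hc hcB hi
  have dist_v {i : ℕ} (hi : i ≤ c.length) :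
      G.dist (c.getVert b) (c.getVert i) = cycleDist c.length b i :=
    hB.dist_getVert hG hc hcB hb hi
  have hcE : c.edges.toFinset ⊆ G.edgeFinset := fun e he => by
    simpa using c.edges_subset_edgeSet (List.mem_toFinset.1 he)
  calc ∑ e ∈ G.edgeFinset, separation G p (c.getVert b) e
      = ∑ e ∈ c.edges.toFinset, separation G p (c.getVert b) e := by
        refine (sum_subset hcE fun e he hec => ?_).symm
        refine hB.separation_eq_zero hG hp hv (mem_edgeFinset.1 he) fun heB => hec ?_
        rwa [List.mem_toFinset, ← Walk.mem_edges_toSubgraph, hcB]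
    _ = ∑ i ∈ range c.length, |((cycleDist c.length 0 (i + 1) : ℤ) -
          cycleDist c.length b (i + 1)) - (cycleDist c.length 0 i - cycleDist c.length b i)| := by
        rw [sum_edges_toFinset_of_isTrail hc.isTrail]
        refine sum_congr rfl fun i hi => ?_
        have hi : i + 1 ≤ c.length := mem_range.1 hi
        have hi' : i ≤ c.length := Nat.le_of_succ_le hi
        rw [separation_mk, distGap, distGap, dist_p hi, dist_p hi', dist_v hi, dist_v hi']
        congr 1
        ring
    _ = 4 * G.dist p (c.getVert b) := by rw [sum_abs_cycleDist_sub hb, dist_p hb]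

lemma IsAttachment.sum_separation_sub_four_mul_dist (hp : IsAttachment B u p) (hB : IsBlock G B)
    (hcycle : IsCycleBlock G B) (hG : G.Connected) (hv : v ∈ B.verts) :
    ∑ e ∈ G.edgeFinset, separation G u v e - 4 * G.dist u v =
      ∑ e ∈ G.edgeFinset, separation G u p e - 4 * G.dist u p := by
  rw [sum_congr rfl fun e he => hp.separation_add hB hG hv (mem_edgeFinset.1 he),
    sum_add_distrib, hB.sum_separation hcycle hG hp.1 hv, hp.dist_eq hB hG hv]
  push_cast
  ring

lemma sum_separation_eq_four_mul_dist (hG : G.Connected)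
    (hblocks : ∀ B : G.Subgraph, IsBlock G B → IsCycleBlock G B) (u v : V) :
    ∑ e ∈ G.edgeFinset, separation G u v e = 4 * G.dist u v := by
  obtain ⟨w⟩ := hG.preconnected v u
  induction w with
  | nil => simp [separation_self]
  | @cons v v' u h _ ih =>
    obtain ⟨B, hB, hvB⟩ := exists_isBlock_adj h
    obtain ⟨p, hp⟩ := exists_isAttachment hG.preconnected ⟨v, hvB.fst_mem⟩ u
    have hv := hp.sum_separation_sub_four_mul_dist hB (hblocks B hB) hG hvB.fst_mem
    have hv' := hp.sum_separation_sub_four_mul_dist hB (hblocks B hB) hG hvB.snd_mem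
    linarith

end Separation

section Counting

variable [Fintype V] {G : SimpleGraph V} {s t : V}

lemma sum_distGap (h : G.Adj s t) :
    ∑ u, distGap G s t u = closerCount G s t - closerCount G t s := by
  simp only [closerCount, card_filter, Nat.cast_sum, ← sum_sub_distrib]
  refine sum_congr rfl fun u _ => ?_
  have := distGap_of_adj h u
  simp only [distGap] at this ⊢
  split_ifs <;> push_cast <;> omega

lemma sum_one_sub_distGap_sq (h : G.Adj s t) :
    ∑ u, (1 - distGap G s t u ^ 2) = (equidistCount G s t : ℤ) := by
  simp only [equidistCount, card_filter, Nat.cast_sum]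
  refine sum_congr rfl fun u _ => ?_
  have hu : G.dist u s = G.dist u t ↔ distGap G s t u = 0 := by
    simp only [distGap]
    omega
  rcases distGap_of_adj h u with h | h | h <;> simp [hu, h]

lemma card_eq_closerCount_add (G : SimpleGraph V) (s t : V) :
    Fintype.card V = closerCount G s t + closerCount G t s + equidistCount G s t := by
  simp only [Fintype.card_eq_sum_ones, closerCount, equidistCount, card_filter, ← sum_add_distrib]
  exact sum_congr rfl fun u _ => by split_ifs <;> omega

lemma sum_sum_separation (h : G.Adj s t) :
    ∑ u, ∑ v, separation G u v s(s, t) =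
      (2 * closerCount G s t + equidistCount G s t) *
        (2 * closerCount G t s + equidistCount G s t) - (equidistCount G s t : ℤ) ^ 2 := by
  have hcard := congrArg (Nat.cast (R := ℤ)) (card_eq_closerCount_add G s t)
  push_cast at hcard
  calc ∑ u, ∑ v, separation G u v s(s, t)
      = (Fintype.card V : ℤ) ^ 2 - (∑ u, distGap G s t u) ^ 2 -
          (∑ u, (1 - distGap G s t u ^ 2)) ^ 2 := by
        simp only [separation_eq_of_adj h, sum_sub_distrib, ← sum_mul_sum, sq]
        simp
    _ = _ := by
        rw [sum_distGap h, sum_one_sub_distGap_sq h, hcard]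
        ring

lemma sum_sum_sym2Mk_eq_two_nsmul {α M : Type*} [Fintype α] [AddCommMonoid M] {f : Sym2 α → M}
    (hf : ∀ a, f s(a, a) = 0) : ∑ a, ∑ b, f s(a, b) = 2 • ∑ p, f p := by
  rw [← Fintype.sum_prod_type' (f := fun a b => f s(a, b)),
    ← sum_fiberwise univ fun x : α × α => s(x.1, x.2), smul_sum]
  refine sum_congr rfl fun p _ => ?_
  induction p with | h a b =>
  by_cases hab : a = b
  · have hfiber : ∀ x ∈ ({x | s(x.1, x.2) = s(a, b)} : Finset (α × α)), f s(x.1, x.2) = 0 :=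
      fun x hx => by rw [(mem_filter.1 hx).2, hab, hf]
    rw [sum_eq_zero hfiber, hab, hf, smul_zero]
  · have hfiber : ({x | s(x.1, x.2) = s(a, b)} : Finset (α × α)) = {(a, b), (b, a)} := by
      ext ⟨c, d⟩
      simp
    rw [hfiber, sum_pair (by simp [hab]), Sym2.eq_swap, two_nsmul]

lemma sum_sum_dist (G : SimpleGraph V) : ∑ u, ∑ v, G.dist u v = 2 * wiener G := by
  rw [wiener, ← smul_eq_mul, ← sum_sum_sym2Mk_eq_two_nsmul fun _ => dist_self]
  rfl

lemma sum_edges_sum_sum_separation (hG : G.Connected)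
    (hblocks : ∀ B : G.Subgraph, IsBlock G B → IsCycleBlock G B) :
    ∑ e ∈ G.edgeFinset, ∑ u, ∑ v, separation G u v e = 8 * wiener G := by
  have hW := congrArg (Nat.cast (R := ℤ)) (sum_sum_dist G)
  push_cast at hW
  calc ∑ e ∈ G.edgeFinset, ∑ u, ∑ v, separation G u v e
      = ∑ u, ∑ v, ∑ e ∈ G.edgeFinset, separation G u v e := by
        rw [sum_comm]
        exact sum_congr rfl fun u _ => sum_comm
    _ = 4 * ∑ u, ∑ v, (G.dist u v : ℤ) := by
        simp only [sum_separation_eq_four_mul_dist hG hblocks, mul_sum]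
    _ = 8 * wiener G := by
        rw [hW]
        ring

lemma revisedSzeged_eq_two_mul_wiener_add (hG : G.Connected)
    (hblocks : ∀ B : G.Subgraph, IsBlock G B → IsCycleBlock G B) :
    revisedSzeged G = 2 * wiener G + (∑ e ∈ G.edgeFinset, (equidistSym2 G e : ℚ) ^ 2) / 4 := by
  have hsep : (8 * wiener G : ℚ) =
      ∑ e ∈ G.edgeFinset, ((∑ u, ∑ v, separation G u v e : ℤ) : ℚ) := by
    exact_mod_cast (sum_edges_sum_sum_separation hG hblocks).symm
  suffices 4 * revisedSzeged G = 8 * wiener G + ∑ e ∈ G.edgeFinset, (equidistSym2 G e : ℚ) ^ 2 by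
    linarith
  rw [hsep, revisedSzeged, mul_sum, ← sum_add_distrib]
  refine sum_congr rfl fun e he => ?_
  induction e with | h s t =>
  rw [sum_sum_separation (mem_edgeFinset.1 he)]
  simp only [Sym2.lift_mk, equidistSym2, equidistCount_comm G t s]
  push_cast
  ring

end Counting

section Parity

variable {G : SimpleGraph V} {s t : V}

lemma equidistCount_eq_zero_iff [Fintype V] :
    equidistCount G s t = 0 ↔ ∀ u, G.dist u s ≠ G.dist u t := by
  simp [equidistCount, filter_eq_empty_iff]

lemma even_length_add_dist_add_dist (h : ∀ u s t, G.Adj s t → G.dist u s ≠ G.dist u t)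
    (w : G.Walk s t) (u : V) : Even (w.length + G.dist u s + G.dist u t) := by
  simp only [Nat.even_iff]
  induction w with
  | nil =>
    rw [Walk.length_nil]
    omega
  | cons hadj w ih =>
    have hne := h u _ _ hadj
    have := hadj.diff_dist_adj (u := u)
    rw [Walk.length_cons]
    omega

lemma dist_ne_dist_of_even_cycles [Finite V] (hG : G.Connected)
    (hblocks : ∀ B : G.Subgraph, IsBlock G B → IsCycleBlock G B)
    (heven : ∀ (v : V) (c : G.Walk v v), c.IsCycle → Even c.length) (hst : G.Adj s t) (u : V) :
    G.dist u s ≠ G.dist u t := by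
  obtain ⟨B, hB, hstB⟩ := exists_isBlock_adj hst
  obtain ⟨p, hp⟩ := exists_isAttachment hG.preconnected ⟨s, hstB.fst_mem⟩ u
  obtain ⟨c, hc, rfl⟩ := (hblocks B hB).exists_isCycle hp.1
  obtain ⟨k, hk, hklt⟩ := (Walk.toSubgraph_adj_iff c).1 hstB
  have dist_ne : G.dist p (c.getVert k) ≠ G.dist p (c.getVert (k + 1)) := by
    have hlen := Nat.even_iff.1 (heven p c hc)
    rw [hB.dist_start_getVert hG hc rfl hklt.le, hB.dist_start_getVert hG hc rfl hklt]
    simp only [cycleDist]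
    omega
  rw [hp.dist_eq hB hG hstB.fst_mem, hp.dist_eq hB hG hstB.snd_mem]
  rcases Sym2.eq_iff.1 hk with ⟨rfl, rfl⟩ | ⟨rfl, rfl⟩
  · exact fun h => dist_ne (Nat.add_left_cancel h)
  · exact fun h => dist_ne (Nat.add_left_cancel h).symm

lemma forall_equidistCount_eq_zero_iff [Fintype V] (hG : G.Connected)
    (hblocks : ∀ B : G.Subgraph, IsBlock G B → IsCycleBlock G B) :
    (∀ s t, G.Adj s t → equidistCount G s t = 0) ↔
      ∀ (v : V) (c : G.Walk v v), c.IsCycle → Even c.length := by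
  simp only [equidistCount_eq_zero_iff]
  refine ⟨fun h v c _ => ?_, fun h s t => dist_ne_dist_of_even_cycles hG hblocks h⟩
  have := even_length_add_dist_add_dist (fun u s t hst => h s t hst u) c v
  simpa using this

end Parity

/-- **Theorem (equality case).** If every block of a finite simple connected graph `G` is a
cycle, then `2·W(G) = Sz*(G)` if and only if every cycle of `G` has even length. -/
theorem two_wiener_eq_revisedSzeged_iff [Fintype V] (G : SimpleGraph V) (hG : G.Connected)
    (hblocks : ∀ B : G.Subgraph, IsBlock G B → IsCycleBlock G B) :
    2 * (wiener G : ℚ) = revisedSzeged G ↔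
      ∀ (v : V) (c : G.Walk v v), c.IsCycle → Even c.length := by
  rw [← forall_equidistCount_eq_zero_iff hG hblocks]
  calc 2 * (wiener G : ℚ) = revisedSzeged G
      ↔ ∑ e ∈ G.edgeFinset, (equidistSym2 G e : ℚ) ^ 2 = 0 := by
        rw [revisedSzeged_eq_two_mul_wiener_add hG hblocks, left_eq_add]
        simp
    _ ↔ ∀ e ∈ G.edgeFinset, equidistSym2 G e = 0 := by
        rw [sum_eq_zero_iff_of_nonneg fun e _ => sq_nonneg _]
        simp
    _ ↔ ∀ s t, G.Adj s t → equidistCount G s t = 0 := by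
        simp [Sym2.forall, equidistSym2]
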